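/- arXiv:cs/0510017 — 2 statements merged into one kernel-verified Lean document; each statement's English description precedes it below -/
import Mathlib

section
/- Fix α ∈ (0,1) and p ∈ (0,1), and let κ = h / log(1/√(pq)) where h = −p log p − q log q (logs base 2); note 0 < κ < 1. Let Y_n be the number of strings among ξ_1, …, ξ_n that agree with ξ_1 in their first F_n(α)+1 bits. Then for every ε > 0 there exist constants C > 0 and δ > 0 such that for all n ≥ 2: P( 1 − κ − ε < (ln Y_n)/(ln n) < 1 − κ + ε ) ≥ 1 − C n^{−δ}. -/
/-!
Partial fillup in tries (Janson–Szpankowski), Theorem 1 (two-point concentration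
of the α-fillup level `F_n(α)`).

Model: an outcome `ω : ℕ → ℕ → Bool` encodes infinitely many strings, where
`ω i j` is the `j`-th bit of the `i`-th string; the measure `ν` makes all bits
i.i.d. with `P(bit = 1) = p`.  The trie on `n` strings uses strings `0,…,n-1`.
-/

open MeasureTheory ProbabilityTheory Real Filter

/-- The number of strings among the first `n` (encoded in `ω`) whose first `k` bits
form the word `r ∈ {0,1}^k`. -/
def prefCount (ω : ℕ → ℕ → Bool) (n k : ℕ) (r : Fin k → Bool) : ℕ :=
  ((Finset.range n).filter fun i => ∀ j : Fin k, ω i j = r j).card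

/-- `X_k`: the number of words `r ∈ {0,1}^k` that are prefixes of at least two of the
first `n` strings. -/
def fillCount (ω : ℕ → ℕ → Bool) (n k : ℕ) : ℕ :=
  (Finset.univ.filter fun r : Fin k → Bool => 2 ≤ prefCount ω n k r).card

/-- `X̄_k = X_k / 2^k`, the proportion of filled words at level `k`. -/
noncomputable def fracFilled (ω : ℕ → ℕ → Bool) (n k : ℕ) : ℝ :=
  (fillCount ω n k : ℝ) / 2 ^ k

/-- The α-fillup level `F_n(α) = max {k : X̄_k ≥ α}`. -/
noncomputable def fillupLevel (α : ℝ) (ω : ℕ → ℕ → Bool) (n : ℕ) : ℕ :=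
  sSup {k | α ≤ fracFilled ω n k}

/-- `ν` is a probability measure on `ℕ → ℕ → Bool` under which all the bits
`ω i j` are i.i.d. with `P(bit = 1) = p` (characterized by cylinder probabilities). -/
def IIDBits (p : ℝ) (ν : Measure (ℕ → ℕ → Bool)) : Prop :=
  IsProbabilityMeasure ν ∧
    ∀ (S : Finset (ℕ × ℕ)) (b : ℕ × ℕ → Bool),
      ν {ω | ∀ s ∈ S, ω s.1 s.2 = b s} =
        ∏ s ∈ S, ENNReal.ofReal (if b s then p else 1 - p)

/-- `Y_n`: the number of strings among `ξ_1, …, ξ_n` (indices `0, …, n-1`) that agree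
with the designated string `ξ_1` (index `0`) in their first `F_n(α) + 1` bits. -/
noncomputable def Ycount (α : ℝ) (ω : ℕ → ℕ → Bool) (n : ℕ) : ℕ :=
  ((Finset.range n).filter fun i =>
    ∀ j < fillupLevel α ω n + 1, ω i j = ω 0 j).card

/-! ### Cylinder events -/

/-- The event that all strings with index in `I` have prefix `r`. -/
def Ev (k : ℕ) (r : Fin k → Bool) (I : Finset ℕ) : Set (ℕ → ℕ → Bool) :=
  {ω | ∀ i ∈ I, ∀ j : Fin k, ω i j = r j}

/-- The probability of a word. -/
noncomputable def wordPr (p : ℝ) (k : ℕ) (r : Fin k → Bool) : ℝ :=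
  ∏ j, (if r j then p else 1 - p)

/-- The number of strings with index in `J` that have prefix `r`. -/
def cnt (ω : ℕ → ℕ → Bool) (J : Finset ℕ) (k : ℕ) (r : Fin k → Bool) : ℕ :=
  (J.filter fun i => ∀ j : Fin k, ω i j = r j).card

lemma wordPr_pos {p : ℝ} (hp : 0 < p) (hp1 : p < 1) (k : ℕ) (r : Fin k → Bool) :
    0 < wordPr p k r := by
  unfold wordPr
  apply Finset.prod_pos
  intro j _
  split_ifs <;> linarith

lemma measurableSet_Ev (k : ℕ) (r : Fin k → Bool) (I : Finset ℕ) :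
    MeasurableSet (Ev k r I) := by
  have : Ev k r I = ⋂ i ∈ I, ⋂ j : Fin k, {ω : ℕ → ℕ → Bool | ω i j = r j} := by
    ext ω; simp [Ev]
  rw [this]
  refine Finset.measurableSet_biInter _ fun i _ => MeasurableSet.iInter fun j => ?_
  have hm : Measurable fun ω : ℕ → ℕ → Bool => ω i j := by fun_prop
  exact hm (measurableSet_singleton (r j))

lemma Ev_real {p : ℝ} (hp : 0 < p) (hp1 : p < 1) {ν : Measure (ℕ → ℕ → Bool)}
    (hν : IIDBits p ν) (k : ℕ) (r : Fin k → Bool) (I : Finset ℕ) :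
    ν.real (Ev k r I) = wordPr p k r ^ I.card := by
  have h := hν.2 (I ×ˢ Finset.range k) (fun s => if h : s.2 < k then r ⟨s.2, h⟩ else false)
  have hs : {ω : ℕ → ℕ → Bool | ∀ s ∈ I ×ˢ Finset.range k,
      ω s.1 s.2 = (fun s : ℕ × ℕ => if h : s.2 < k then r ⟨s.2, h⟩ else false) s} = Ev k r I := by
    ext ω
    simp only [Set.mem_ofPred_eq, Ev, Finset.mem_product, Finset.mem_range, Prod.forall]
    constructor
    · intro H i hi j
      have := H i j ⟨hi, j.2⟩
      simpa using this
    · intro H i j hij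
      have := H i hij.1 ⟨j, hij.2⟩
      simpa [hij.2] using this
  rw [hs] at h
  rw [Measure.real, h, Finset.prod_product]
  rw [Finset.prod_eq_pow_card (b := ENNReal.ofReal (wordPr p k r)), ENNReal.toReal_pow,
    ENNReal.toReal_ofReal (wordPr_pos hp hp1 k r).le]
  intro i _
  rw [Finset.prod_range]
  unfold wordPr
  rw [ENNReal.ofReal_prod_of_nonneg]
  · refine Finset.prod_congr rfl fun j _ => ?_
    simp only [Fin.is_lt, dite_true, Fin.eta]
  · intro j _
    split_ifs <;> linarith

lemma cnt_eq_sum (ω : ℕ → ℕ → Bool) (J : Finset ℕ) (k : ℕ) (r : Fin k → Bool) :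
    (cnt ω J k r : ℝ) = ∑ i ∈ J, (Ev k r {i}).indicator 1 ω := by
  unfold cnt
  rw [Finset.card_filter]
  push_cast
  refine Finset.sum_congr rfl fun i _ => ?_
  simp only [Set.indicator, Ev, Finset.mem_singleton, forall_eq, Set.mem_ofPred_eq, Pi.one_apply]

lemma measurable_cnt (J : Finset ℕ) (k : ℕ) (r : Fin k → Bool) :
    Measurable fun ω => (cnt ω J k r : ℝ) := by
  simp only [cnt_eq_sum]
  refine Finset.measurable_sum _ fun i _ => ?_
  exact measurable_one.indicator (measurableSet_Ev k r {i})

lemma Ev_ind_mul (k : ℕ) (r : Fin k → Bool) (I : Finset ℕ) (i : ℕ) (ω : ℕ → ℕ → Bool) :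
    (Ev k r I).indicator (1 : (ℕ → ℕ → Bool) → ℝ) ω * (Ev k r {i}).indicator 1 ω =
      (Ev k r (insert i I)).indicator 1 ω := by
  have : Ev k r (insert i I) = Ev k r I ∩ Ev k r {i} := by
    ext ω; simp [Ev]; tauto
  rw [this, Set.inter_indicator_one]; rfl

lemma Ev_integrable {ν : Measure (ℕ → ℕ → Bool)} [IsProbabilityMeasure ν]
    (k : ℕ) (r : Fin k → Bool) (I : Finset ℕ) :
    Integrable (fun ω => (Ev k r I).indicator (1 : (ℕ → ℕ → Bool) → ℝ) ω) ν :=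
  (integrable_const (1 : ℝ)).indicator (measurableSet_Ev k r I)

lemma Ev_integral {p : ℝ} (hp : 0 < p) (hp1 : p < 1) {ν : Measure (ℕ → ℕ → Bool)}
    (hν : IIDBits p ν) (k : ℕ) (r : Fin k → Bool) (I : Finset ℕ) :
    ∫ ω, (Ev k r I).indicator (1 : (ℕ → ℕ → Bool) → ℝ) ω ∂ν = wordPr p k r ^ I.card := by
  rw [integral_indicator_one (measurableSet_Ev k r I), Ev_real hp hp1 hν]

/-- A measurable set whose scaled indicator is dominated by `f` has measure at most `∫ f / c`. -/
lemma real_le_of_indicator {ν : Measure (ℕ → ℕ → Bool)} [IsProbabilityMeasure ν]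
    {B : Set (ℕ → ℕ → Bool)} (hB : MeasurableSet B) {f : (ℕ → ℕ → Bool) → ℝ}
    (hf : Integrable f ν) (c : ℝ) (h0 : ∀ ω, 0 ≤ f ω) (h : ∀ ω ∈ B, c ≤ f ω) :
    c * ν.real B ≤ ∫ ω, f ω ∂ν := by
  have h1 : ∫ ω, B.indicator (fun _ => c) ω ∂ν = c * ν.real B := by
    rw [integral_indicator_const _ hB, smul_eq_mul, mul_comm]
  rw [← h1]
  refine integral_mono ((integrable_const c).indicator hB) hf fun ω => ?_
  by_cases hω : ω ∈ B
  · simpa [hω] using h ω hω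
  · simpa [hω] using h0 ω

lemma upper_tail {p : ℝ} (hp : 0 < p) (hp1 : p < 1) {ν : Measure (ℕ → ℕ → Bool)}
    (hν : IIDBits p ν) (k : ℕ) (r : Fin k → Bool) (I J : Finset ℕ) (hIJ : Disjoint I J)
    {T : ℝ} (hT : 0 < T) :
    ν.real (Ev k r I ∩ {ω | T ≤ cnt ω J k r}) ≤
      wordPr p k r ^ I.card * min 1 (J.card * wordPr p k r / T) := by
  have := hν.1
  have hP := wordPr_pos hp hp1 k r
  rw [mul_min_of_nonneg _ _ (by positivity)]
  refine le_min ?_ ?_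
  · rw [mul_one, ← Ev_real hp hp1 hν k r I]
    exact measureReal_mono Set.inter_subset_left
  · have key := real_le_of_indicator (ν := ν)
      (B := Ev k r I ∩ {ω | T ≤ cnt ω J k r})
      ((measurableSet_Ev k r I).inter (measurableSet_le measurable_const (measurable_cnt J k r)))
      (f := fun ω => ∑ i ∈ J, (Ev k r (insert i I)).indicator 1 ω)
      (integrable_finsetSum _ fun i _ => Ev_integrable k r _) T
      (fun ω => Finset.sum_nonneg fun i _ => Set.indicator_nonneg (by simp) _)
      (by
        rintro ω ⟨h1, h2⟩
        simp only [← Ev_ind_mul, ← Finset.mul_sum, ← cnt_eq_sum]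
        simpa [h1] using h2)
    rw [integral_finsetSum _ fun i _ => Ev_integrable k r _] at key
    simp only [Ev_integral hp hp1 hν] at key
    have : ∑ i ∈ J, wordPr p k r ^ (insert i I).card = J.card * wordPr p k r ^ (I.card + 1) := by
      rw [← nsmul_eq_mul, ← Finset.sum_const]
      refine Finset.sum_congr rfl fun i hi => ?_
      rw [Finset.card_insert_of_notMem]
      exact fun h => Finset.disjoint_left.mp hIJ h hi
    rw [this, pow_succ] at key
    rw [← mul_div_assoc, le_div_iff₀ hT]
    linarith

lemma lower_tail {p : ℝ} (hp : 0 < p) (hp1 : p < 1) {ν : Measure (ℕ → ℕ → Bool)}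
    (hν : IIDBits p ν) (k : ℕ) (r : Fin k → Bool) (I J : Finset ℕ) (hIJ : Disjoint I J)
    (hJ : 0 < J.card) {T : ℝ} (hT : 1 ≤ T) :
    ν.real (Ev k r I ∩ {ω | cnt ω J k r ≤ T}) ≤
      wordPr p k r ^ I.card * min 1 (4 * T / (J.card * wordPr p k r)) := by
  have := hν.1
  have hP := wordPr_pos hp hp1 k r
  have h1 : ν.real (Ev k r I ∩ {ω | cnt ω J k r ≤ T}) ≤ wordPr p k r ^ I.card := by
    rw [← Ev_real hp hp1 hν k r I]
    exact measureReal_mono Set.inter_subset_left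
  rw [mul_min_of_nonneg _ _ (by positivity)]
  refine le_min (by simpa using h1) ?_
  set m : ℝ := J.card * wordPr p k r with hm
  have hJ' : (0 : ℝ) < J.card := by exact_mod_cast hJ
  have hm0 : 0 < m := by positivity
  by_cases hTm : m / 2 < T
  · refine h1.trans (le_mul_of_one_le_right (by positivity) ?_)
    rw [le_div_iff₀ hm0]; linarith
  push Not at hTm
  have hnot : ∀ i ∈ J, i ∉ I := fun i hi h => Finset.disjoint_left.mp hIJ h hi
  have hint1 : Integrable (fun ω => ∑ i ∈ J, ∑ j ∈ J,
      (Ev k r (insert j (insert i I))).indicator (1 : (ℕ → ℕ → Bool) → ℝ) ω) ν :=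
    integrable_finsetSum _ fun i _ => integrable_finsetSum _ fun j _ => Ev_integrable k r _
  have hint2 : Integrable (fun ω => 2 * m * ∑ i ∈ J,
      (Ev k r (insert i I)).indicator (1 : (ℕ → ℕ → Bool) → ℝ) ω) ν :=
    (integrable_finsetSum _ fun j _ => Ev_integrable k r _).const_mul _
  have hint3 : Integrable (fun ω => m ^ 2 * (Ev k r I).indicator (1 : (ℕ → ℕ → Bool) → ℝ) ω) ν :=
    (Ev_integrable k r _).const_mul _
  have hpt : ∀ ω, ((∑ i ∈ J, ∑ j ∈ J, (Ev k r (insert j (insert i I))).indicator (1 : (ℕ → ℕ → Bool) → ℝ) ω)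
        - 2 * m * ∑ i ∈ J, (Ev k r (insert i I)).indicator (1 : (ℕ → ℕ → Bool) → ℝ) ω)
        + m ^ 2 * (Ev k r I).indicator (1 : (ℕ → ℕ → Bool) → ℝ) ω
      = (Ev k r I).indicator (1 : (ℕ → ℕ → Bool) → ℝ) ω * ((cnt ω J k r : ℝ) - m) ^ 2 := by
    intro ω
    simp only [← Ev_ind_mul, ← Finset.mul_sum, ← cnt_eq_sum, ← Finset.sum_mul]
    ring
  have key := real_le_of_indicator (ν := ν)
      (B := Ev k r I ∩ {ω | cnt ω J k r ≤ T})
      ((measurableSet_Ev k r I).inter (measurableSet_le (measurable_cnt J k r) measurable_const))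
      ((hint1.sub hint2).add hint3) (m ^ 2 / 4)
      (fun ω => by
        simp only [Pi.add_apply, Pi.sub_apply]
        rw [hpt]
        exact mul_nonneg (Set.indicator_nonneg (by simp) _) (sq_nonneg _))
      (by
        rintro ω ⟨ha, hb⟩
        simp only [Pi.add_apply, Pi.sub_apply]
        rw [hpt]
        simp only [Set.mem_ofPred_eq] at hb
        simp only [ha, Set.indicator_of_mem, Pi.one_apply, one_mul]
        nlinarith)
  simp only [Pi.add_apply, Pi.sub_apply] at key
  have hint12 : Integrable (fun ω => (∑ i ∈ J, ∑ j ∈ J,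
      (Ev k r (insert j (insert i I))).indicator (1 : (ℕ → ℕ → Bool) → ℝ) ω) - 2 * m * ∑ i ∈ J,
      (Ev k r (insert i I)).indicator (1 : (ℕ → ℕ → Bool) → ℝ) ω) ν := hint1.sub hint2
  rw [integral_add hint12 hint3, integral_sub hint1 hint2, integral_const_mul,
    integral_const_mul, Ev_integral hp hp1 hν,
    integral_finsetSum _ fun i _ => Ev_integrable k r _,
    integral_finsetSum _ fun i _ => integrable_finsetSum _ fun j _ => Ev_integrable k r _] at key
  simp only [integral_finsetSum _ fun i _ => Ev_integrable k r _, Ev_integral hp hp1 hν] at key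
  have e1 : ∑ i ∈ J, wordPr p k r ^ (insert i I).card = m * wordPr p k r ^ I.card := by
    rw [hm, mul_assoc, ← pow_succ', ← nsmul_eq_mul, ← Finset.sum_const]
    refine Finset.sum_congr rfl fun i hi => ?_
    rw [Finset.card_insert_of_notMem (hnot i hi)]
  have e2 : ∑ i ∈ J, ∑ j ∈ J, wordPr p k r ^ (insert j (insert i I)).card
      ≤ wordPr p k r ^ I.card * (m + m ^ 2) := by
    have : ∀ i ∈ J, ∑ j ∈ J, wordPr p k r ^ (insert j (insert i I)).card ≤
        wordPr p k r ^ (I.card + 1) + J.card * wordPr p k r ^ (I.card + 2) := by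
      intro i hi
      have hle : ∀ j ∈ J, wordPr p k r ^ (insert j (insert i I)).card ≤
          (if i = j then wordPr p k r ^ (I.card + 1) else 0) + wordPr p k r ^ (I.card + 2) := by
        intro j hj
        by_cases hij : i = j
        · subst hij
          simp only [Finset.insert_idem, if_true]
          rw [Finset.card_insert_of_notMem (hnot i hi)]
          have : 0 ≤ wordPr p k r ^ (I.card + 2) := by positivity
          linarith
        · rw [if_neg hij, zero_add, Finset.card_insert_of_notMem,
            Finset.card_insert_of_notMem (hnot i hi)]
          simp only [Finset.mem_insert, not_or]
          exact ⟨fun h => hij h.symm, hnot j hj⟩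
      refine (Finset.sum_le_sum hle).trans ?_
      rw [Finset.sum_add_distrib, Finset.sum_ite_eq, if_pos hi]
      simp
    refine (Finset.sum_le_sum this).trans ?_
    rw [Finset.sum_const, nsmul_eq_mul, hm]
    apply le_of_eq; ring
  rw [e1] at key
  have hfin : m ^ 2 / 4 * ν.real (Ev k r I ∩ {ω | cnt ω J k r ≤ T}) ≤
      wordPr p k r ^ I.card * m := by nlinarith
  rw [← mul_div_assoc, le_div_iff₀ hm0]
  have hPI : 0 < wordPr p k r ^ I.card := by positivity
  have h5 : m * ν.real (Ev k r I ∩ {ω | cnt ω J k r ≤ T}) ≤ 4 * wordPr p k r ^ I.card := by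
    have : m * (m * ν.real (Ev k r I ∩ {ω | cnt ω J k r ≤ T})) ≤
      m * (4 * wordPr p k r ^ I.card) := by nlinarith
    exact le_of_mul_le_mul_left this hm0
  nlinarith

/-! ### Analytic estimates -/

/-- The level `⌊c ln n⌋`. -/
noncomputable def kk (c : ℝ) (n : ℕ) : ℕ := ⌊c * Real.log n⌋₊

lemma exp_quad (w1 w0 x y M : ℝ) (h1 : 0 ≤ w1) (h0 : 0 ≤ w0) (hw : w1 + w0 = 1)
    (hM : 0 < M) (hx : |x| ≤ M) (hy : |y| ≤ M) (s : ℝ) (hs : 0 < s) (hsM : s * M ≤ 1) :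
    w1 * Real.exp (s * x) + w0 * Real.exp (s * y) ≤
      Real.exp (s * (w1 * x + w0 * y + s * M ^ 2)) := by
  have quad : ∀ z : ℝ, |z| ≤ M → Real.exp (s * z) ≤ 1 + s * z + s ^ 2 * M ^ 2 := by
    intro z hz
    have hsz : |s * z| ≤ 1 := by
      rw [abs_mul, abs_of_pos hs]
      exact (mul_le_mul_of_nonneg_left hz hs.le).trans hsM
    have h2 := Real.abs_exp_sub_one_sub_id_le hsz
    have h3 : (s * z) ^ 2 ≤ s ^ 2 * M ^ 2 := by
      rw [mul_pow]
      exact mul_le_mul_of_nonneg_left (sq_le_sq' (by linarith [neg_abs_le z]) ((le_abs_self z).trans hz)) (sq_nonneg _)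
    have := le_abs_self (Real.exp (s * z) - 1 - s * z)
    linarith
  have a1 := mul_le_mul_of_nonneg_left (quad x hx) h1
  have a0 := mul_le_mul_of_nonneg_left (quad y hy) h0
  have b := Real.add_one_le_exp (s * (w1 * x + w0 * y + s * M ^ 2))
  have hw0 : w0 = 1 - w1 := by linarith
  subst hw0
  nlinarith

lemma min_one_le_rpow {t s : ℝ} (ht : 0 < t) (hs : 0 < s) (hs1 : s ≤ 1) : min 1 t ≤ t ^ s := by
  rcases le_total 1 t with h | h
  · exact (min_le_left _ _).trans (Real.one_le_rpow h hs.le)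
  · refine (min_le_right _ _).trans ?_
    calc t = t ^ (1 : ℝ) := (Real.rpow_one t).symm
      _ ≤ t ^ s := Real.rpow_le_rpow_of_exponent_ge ht h hs1

lemma sum_words (k : ℕ) (f : Bool → ℝ) :
    ∑ r : Fin k → Bool, ∏ j, f (r j) = (f true + f false) ^ k := by
  have := Finset.prod_univ_sum (fun _ : Fin k => (Finset.univ : Finset Bool)) (fun _ b => f b)
  simp only [Fintype.piFinset_univ] at this
  rw [← this]; simp

lemma master (w1 w0 x y a c K : ℝ) (h1 : 0 ≤ w1) (h0 : 0 ≤ w0) (hw : w1 + w0 = 1)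
    (hc : 0 < c) (hK : 0 < K) (hneg : a + (w1 * x + w0 * y) * c < 0) :
    ∃ C > (0 : ℝ), ∃ δ > (0 : ℝ), ∀ n : ℕ, 1 ≤ n →
      ∑ r : Fin (kk c n) → Bool, (∏ j, (if r j then w1 else w0)) *
        min 1 (K * (n : ℝ) ^ a * ∏ j, Real.exp (if r j then x else y)) ≤ C * (n : ℝ) ^ (-δ) := by
  set μ := w1 * x + w0 * y with hμ
  set g := -(a + μ * c) with hg
  have hg0 : 0 < g := by linarith
  set M := max 1 (max |x| |y|)
  have hM1 : 1 ≤ M := le_max_left _ _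
  have hM0 : 0 < M := by linarith
  have hx : |x| ≤ M := (le_max_left _ _).trans (le_max_right _ _)
  have hy : |y| ≤ M := (le_max_right _ _).trans (le_max_right _ _)
  obtain ⟨s, hs, hsM, hs2⟩ : ∃ s : ℝ, 0 < s ∧ s * M ≤ 1 ∧ s * M ^ 2 * c ≤ g / 2 := by
    refine ⟨min (1 / M) (g / (2 * M ^ 2 * c)), by positivity, ?_, ?_⟩
    · calc _ ≤ 1 / M * M := by gcongr; exact min_le_left _ _
        _ = 1 := by field_simp
    · calc _ ≤ g / (2 * M ^ 2 * c) * M ^ 2 * c := by gcongr; exact min_le_right _ _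
        _ = g / 2 := by field_simp
  have hs1 : s ≤ 1 := by nlinarith
  set b := μ + s * M ^ 2 with hb
  refine ⟨K ^ s * Real.exp (s * |b|), by positivity, s * g / 2, by positivity, ?_⟩
  intro n hn
  have hn0 : (0 : ℝ) < n := by exact_mod_cast hn
  have hL : 0 ≤ Real.log n := Real.log_nonneg (by exact_mod_cast hn)
  set k := kk c n with hk
  have hk1 : (k : ℝ) ≤ c * Real.log n := Nat.floor_le (by positivity)
  have hk2 : c * Real.log n < k + 1 := Nat.lt_floor_add_one _
  have step1 : ∑ r : Fin k → Bool, (∏ j, (if r j then w1 else w0)) *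
        min 1 (K * (n : ℝ) ^ a * ∏ j, Real.exp (if r j then x else y)) ≤
      ∑ r : Fin k → Bool, K ^ s * (n : ℝ) ^ (a * s) *
        ∏ j, (fun t : Bool => (if t then w1 else w0) * Real.exp (s * if t then x else y)) (r j) := by
    refine Finset.sum_le_sum fun r _ => ?_
    have hpos : 0 < K * (n : ℝ) ^ a * ∏ j, Real.exp (if r j then x else y) := by
      have : 0 < ∏ j, Real.exp (if r j then x else y) := Finset.prod_pos fun j _ => Real.exp_pos _
      positivity
    have hwn : 0 ≤ ∏ j, (if r j then w1 else w0) :=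
      Finset.prod_nonneg fun j _ => by split_ifs <;> assumption
    refine (mul_le_mul_of_nonneg_left (min_one_le_rpow hpos hs hs1) hwn).trans (le_of_eq ?_)
    rw [Real.mul_rpow (by positivity) (Finset.prod_nonneg fun j _ => (Real.exp_pos _).le),
      Real.mul_rpow hK.le (by positivity), ← Real.rpow_mul hn0.le,
      ← Real.finsetProd_rpow _ _ (fun j _ => (Real.exp_pos _).le), Finset.prod_mul_distrib]
    have : ∀ j, Real.exp (if r j then x else y) ^ s = Real.exp (s * if r j then x else y) := by
      intro j; rw [← Real.exp_mul, mul_comm]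
    simp only [this]
    ring
  refine step1.trans ?_
  rw [← Finset.mul_sum, sum_words k (fun t : Bool => (if t then w1 else w0) *
    Real.exp (s * if t then x else y))]
  simp only [if_true, Bool.false_eq_true, if_false]
  have hq := exp_quad w1 w0 x y M h1 h0 hw hM0 hx hy s hs hsM
  have hq' : (w1 * Real.exp (s * x) + w0 * Real.exp (s * y)) ^ k ≤
      Real.exp (s * |b|) * (n : ℝ) ^ (s * (b * c)) := by
    refine (pow_le_pow_left₀ (by positivity) hq k).trans ?_
    rw [← Real.exp_nat_mul, Real.rpow_def_of_pos hn0, ← Real.exp_add]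
    apply Real.exp_le_exp.mpr
    have : (k : ℝ) * b ≤ |b| + Real.log n * (b * c) := by
      have e : b * (k - c * Real.log n) ≤ |b| * 1 := by
        refine (le_abs_self _).trans ?_
        rw [abs_mul]
        refine mul_le_mul_of_nonneg_left ?_ (abs_nonneg _)
        rw [abs_le]; constructor <;> linarith
      linarith
    have := mul_le_mul_of_nonneg_left this hs.le
    linarith
  calc K ^ s * (n : ℝ) ^ (a * s) * (w1 * Real.exp (s * x) + w0 * Real.exp (s * y)) ^ k
      ≤ K ^ s * (n : ℝ) ^ (a * s) * (Real.exp (s * |b|) * (n : ℝ) ^ (s * (b * c))) := by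
        gcongr
    _ = K ^ s * Real.exp (s * |b|) * (n : ℝ) ^ (a * s + s * (b * c)) := by
        rw [Real.rpow_add hn0]; ring
    _ ≤ K ^ s * Real.exp (s * |b|) * (n : ℝ) ^ (-(s * g / 2)) := by
        gcongr
        · exact_mod_cast hn
        · have : a + b * c ≤ - g / 2 := by rw [hb]; nlinarith
          nlinarith

lemma wordPr_eq_exp {p : ℝ} (hp : 0 < p) (hp1 : p < 1) (k : ℕ) (r : Fin k → Bool) :
    ∏ j, Real.exp (if r j then Real.log p else Real.log (1 - p)) = wordPr p k r := by
  unfold wordPr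
  refine Finset.prod_congr rfl fun j _ => ?_
  split_ifs
  · exact Real.exp_log hp
  · exact Real.exp_log (by linarith)

lemma wordPr_inv_eq_exp {p : ℝ} (hp : 0 < p) (hp1 : p < 1) (k : ℕ) (r : Fin k → Bool) :
    ∏ j, Real.exp (if r j then -Real.log p else -Real.log (1 - p)) = (wordPr p k r)⁻¹ := by
  rw [← wordPr_eq_exp hp hp1, ← Finset.prod_inv_distrib]
  refine Finset.prod_congr rfl fun j _ => ?_
  rw [← Real.exp_neg]
  split_ifs <;> rfl

lemma half_prod (k : ℕ) (r : Fin k → Bool) :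
    ∏ j, (if r j then (1 / 2 : ℝ) else 1 / 2) = 1 / 2 ^ k := by
  simp

/-! ### Polynomially small events -/

/-- The sequence of events `B n` has probability `O(n^{-δ})` for some `δ > 0`. -/
def PolySmall (ν : Measure (ℕ → ℕ → Bool)) (B : ℕ → Set (ℕ → ℕ → Bool)) : Prop :=
  ∃ C > (0 : ℝ), ∃ δ > (0 : ℝ), ∀ᶠ n : ℕ in atTop, ν.real (B n) ≤ C * (n : ℝ) ^ (-δ)

lemma PolySmall.mono {ν : Measure (ℕ → ℕ → Bool)} [IsProbabilityMeasure ν]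
    {A B : ℕ → Set (ℕ → ℕ → Bool)}
    (hB : PolySmall ν B) (h : ∀ᶠ n : ℕ in atTop, A n ⊆ B n) : PolySmall ν A := by
  obtain ⟨C, hC, δ, hδ, H⟩ := hB
  refine ⟨C, hC, δ, hδ, ?_⟩
  filter_upwards [H, h] with n h1 h2
  exact (measureReal_mono h2).trans h1

lemma PolySmall.union {ν : Measure (ℕ → ℕ → Bool)} [IsProbabilityMeasure ν]
    {A B : ℕ → Set (ℕ → ℕ → Bool)} (hA : PolySmall ν A)
    (hB : PolySmall ν B) : PolySmall ν (fun n => A n ∪ B n) := by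
  obtain ⟨C, hC, δ, hδ, H⟩ := hA
  obtain ⟨C', hC', δ', hδ', H'⟩ := hB
  refine ⟨C + C', by positivity, min δ δ', lt_min hδ hδ', ?_⟩
  filter_upwards [H, H', eventually_ge_atTop 1] with n h1 h2 hn
  have hn1 : (1 : ℝ) ≤ n := by exact_mod_cast hn
  have e1 : (n : ℝ) ^ (-δ) ≤ (n : ℝ) ^ (-(min δ δ')) :=
    Real.rpow_le_rpow_of_exponent_le hn1 (neg_le_neg (min_le_left _ _))
  have e2 : (n : ℝ) ^ (-δ') ≤ (n : ℝ) ^ (-(min δ δ')) :=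
    Real.rpow_le_rpow_of_exponent_le hn1 (neg_le_neg (min_le_right _ _))
  calc ν.real (A n ∪ B n) ≤ ν.real (A n) + ν.real (B n) := measureReal_union_le _ _
    _ ≤ C * (n : ℝ) ^ (-δ) + C' * (n : ℝ) ^ (-δ') := add_le_add h1 h2
    _ ≤ C * (n : ℝ) ^ (-(min δ δ')) + C' * (n : ℝ) ^ (-(min δ δ')) := by gcongr
    _ = _ := by ring

lemma count_markov {ν : Measure (ℕ → ℕ → Bool)} [IsProbabilityMeasure ν]
    {ι : Type*} [Fintype ι] (B : ι → Set (ℕ → ℕ → Bool)) (hB : ∀ r, MeasurableSet (B r))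
    {c : ℝ} (hc : 0 < c) :
    ν.real {ω | c ≤ ∑ r, (B r).indicator (1 : (ℕ → ℕ → Bool) → ℝ) ω} ≤
      (∑ r, ν.real (B r)) / c := by
  have hI : ∀ r, Integrable (fun ω => (B r).indicator (1 : (ℕ → ℕ → Bool) → ℝ) ω) ν :=
    fun r => (integrable_const (1 : ℝ)).indicator (hB r)
  have hm : Measurable fun ω => ∑ r, (B r).indicator (1 : (ℕ → ℕ → Bool) → ℝ) ω :=
    Finset.measurable_sum _ fun r _ => measurable_one.indicator (hB r)
  have key := real_le_of_indicator (ν := ν)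
    (B := {ω | c ≤ ∑ r, (B r).indicator (1 : (ℕ → ℕ → Bool) → ℝ) ω})
    (measurableSet_le measurable_const hm)
    (f := fun ω => ∑ r, (B r).indicator (1 : (ℕ → ℕ → Bool) → ℝ) ω)
    (integrable_finsetSum _ fun r _ => hI r) c
    (fun ω => Finset.sum_nonneg fun i _ => Set.indicator_nonneg (by simp) _)
    (fun ω hω => hω)
  rw [integral_finsetSum _ fun r _ => hI r] at key
  simp only [integral_indicator_one (hB _)] at key
  rw [le_div_iff₀ hc]
  linarith

lemma Ev_empty (k : ℕ) (r : Fin k → Bool) : Ev k r ∅ = Set.univ := by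
  ext ω; simp [Ev]

lemma fillCount_eq (ω : ℕ → ℕ → Bool) (n k : ℕ) :
    (fillCount ω n k : ℝ) = ∑ r : Fin k → Bool,
      {ω | (2 : ℝ) ≤ cnt ω (Finset.range n) k r}.indicator (1 : (ℕ → ℕ → Bool) → ℝ) ω := by
  unfold fillCount
  rw [Finset.card_filter]
  push_cast
  refine Finset.sum_congr rfl fun r _ => ?_
  have : prefCount ω n k r = cnt ω (Finset.range n) k r := rfl
  simp only [Set.indicator, Set.mem_ofPred_eq, Pi.one_apply, this]
  norm_cast

lemma fillCount_compl (ω : ℕ → ℕ → Bool) (n k : ℕ) :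
    (2 : ℝ) ^ k - fillCount ω n k = ∑ r : Fin k → Bool,
      {ω | (cnt ω (Finset.range n) k r : ℝ) ≤ 1}.indicator (1 : (ℕ → ℕ → Bool) → ℝ) ω := by
  rw [fillCount_eq, sub_eq_iff_eq_add, ← Finset.sum_add_distrib]
  have : ∀ r : Fin k → Bool,
      {ω | (cnt ω (Finset.range n) k r : ℝ) ≤ 1}.indicator (1 : (ℕ → ℕ → Bool) → ℝ) ω +
      {ω | (2 : ℝ) ≤ cnt ω (Finset.range n) k r}.indicator (1 : (ℕ → ℕ → Bool) → ℝ) ω = 1 := by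
    intro r
    simp only [Set.indicator, Set.mem_ofPred_eq, Pi.one_apply]
    norm_cast
    split_ifs <;> first | omega | norm_num
  simp only [this]
  simp

lemma eventA {p α c : ℝ} (hp : 0 < p) (hp1 : p < 1) (hα1 : α < 1)
    {ν : Measure (ℕ → ℕ → Bool)} (hν : IIDBits p ν) (hc : 0 < c)
    (hneg : (-(Real.log p + Real.log (1 - p)) / 2) * c < 1) :
    PolySmall ν (fun n => {ω | fracFilled ω n (kk c n) < α}) := by
  have := hν.1
  obtain ⟨C, hC, δ, hδ, H⟩ := master (1 / 2) (1 / 2) (-Real.log p) (-Real.log (1 - p)) (-1) c 4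
    (by norm_num) (by norm_num) (by norm_num) hc (by norm_num) (by linarith)
  have hα' : 0 < 1 - α := by linarith
  refine ⟨C / (1 - α), by positivity, δ, hδ, ?_⟩
  filter_upwards [eventually_ge_atTop 1] with n hn
  have hn0 : (0 : ℝ) < n := by exact_mod_cast hn
  have Hn := H n hn
  set k := kk c n
  have hsub : {ω | fracFilled ω n k < α} ⊆ {ω | (1 - α) * 2 ^ k ≤ ∑ r : Fin k → Bool,
      {ω | (cnt ω (Finset.range n) k r : ℝ) ≤ 1}.indicator (1 : (ℕ → ℕ → Bool) → ℝ) ω} := by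
    intro ω hω
    simp only [Set.mem_ofPred_eq, fracFilled] at hω ⊢
    rw [← fillCount_compl]
    rw [div_lt_iff₀ (by positivity)] at hω
    linarith
  refine (measureReal_mono hsub).trans ?_
  refine (count_markov _ (fun r => measurableSet_le (measurable_cnt _ k r) measurable_const)
    (by positivity)).trans ?_
  rw [div_le_iff₀ (by positivity)]
  have hb : ∀ r : Fin k → Bool, ν.real {ω | (cnt ω (Finset.range n) k r : ℝ) ≤ 1} ≤
      2 ^ k * ((∏ j, (if r j then (1 / 2 : ℝ) else 1 / 2)) * min 1 (4 * (n : ℝ) ^ (-1 : ℝ) *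
        ∏ j, Real.exp (if r j then -Real.log p else -Real.log (1 - p)))) := by
    intro r
    have hP := wordPr_pos hp hp1 k r
    have h1 := lower_tail hp hp1 hν k r ∅ (Finset.range n) (by simp) (by simp; omega)
      (le_refl (1 : ℝ))
    rw [Ev_empty, Set.univ_inter] at h1
    refine h1.trans (le_of_eq ?_)
    rw [half_prod, wordPr_inv_eq_exp hp hp1, Real.rpow_neg_one]
    simp only [Finset.card_empty, pow_zero, one_mul, Finset.card_range]
    rw [← mul_assoc, mul_one_div_cancel (by positivity), one_mul]
    congr 1
    field_simp
  calc _ ≤ _ := Finset.sum_le_sum fun r _ => hb r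
    _ ≤ 2 ^ k * (C * (n : ℝ) ^ (-δ)) := by
      rw [← Finset.mul_sum]
      exact mul_le_mul_of_nonneg_left Hn (by positivity)
    _ = _ := by field_simp

lemma eventB {p α c : ℝ} (hp : 0 < p) (hp1 : p < 1) (hα : 0 < α)
    {ν : Measure (ℕ → ℕ → Bool)} (hν : IIDBits p ν) (hc : 0 < c)
    (hneg : 1 < (-(Real.log p + Real.log (1 - p)) / 2) * c) :
    PolySmall ν (fun n => {ω | α ≤ fracFilled ω n (kk c n)}) := by
  have := hν.1
  obtain ⟨C, hC, δ, hδ, H⟩ := master (1 / 2) (1 / 2) (Real.log p) (Real.log (1 - p)) 1 c 1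
    (by norm_num) (by norm_num) (by norm_num) hc (by norm_num) (by linarith)
  refine ⟨C / α, by positivity, δ, hδ, ?_⟩
  filter_upwards [eventually_ge_atTop 1] with n hn
  have hn0 : (0 : ℝ) < n := by exact_mod_cast hn
  have Hn := H n hn
  set k := kk c n
  have hsub : {ω | α ≤ fracFilled ω n k} ⊆ {ω | α * 2 ^ k ≤ ∑ r : Fin k → Bool,
      {ω | (2 : ℝ) ≤ cnt ω (Finset.range n) k r}.indicator (1 : (ℕ → ℕ → Bool) → ℝ) ω} := by
    intro ω hω
    simp only [Set.mem_ofPred_eq, fracFilled] at hω ⊢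
    rw [← fillCount_eq]
    rwa [le_div_iff₀ (by positivity)] at hω
  refine (measureReal_mono hsub).trans ?_
  refine (count_markov _ (fun r => measurableSet_le measurable_const (measurable_cnt _ k r))
    (by positivity)).trans ?_
  rw [div_le_iff₀ (by positivity)]
  have hb : ∀ r : Fin k → Bool, ν.real {ω | (2 : ℝ) ≤ cnt ω (Finset.range n) k r} ≤
      2 ^ k * ((∏ j, (if r j then (1 / 2 : ℝ) else 1 / 2)) * min 1 (1 * (n : ℝ) ^ (1 : ℝ) *
        ∏ j, Real.exp (if r j then Real.log p else Real.log (1 - p)))) := by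
    intro r
    have hP := wordPr_pos hp hp1 k r
    have h1 := upper_tail hp hp1 hν k r ∅ (Finset.range n) (by simp) (zero_lt_two (α := ℝ))
    rw [Ev_empty, Set.univ_inter] at h1
    refine h1.trans ?_
    rw [half_prod, wordPr_eq_exp hp hp1, Real.rpow_one]
    simp only [Finset.card_empty, pow_zero, one_mul, Finset.card_range]
    rw [← mul_assoc, mul_one_div_cancel (by positivity), one_mul]
    refine min_le_min le_rfl ?_
    have : 0 < n * wordPr p k r := by positivity
    linarith
  calc _ ≤ _ := Finset.sum_le_sum fun r _ => hb r
    _ ≤ 2 ^ k * (C * (n : ℝ) ^ (-δ)) := by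
      rw [← Finset.mul_sum]
      exact mul_le_mul_of_nonneg_left Hn (by positivity)
    _ = _ := by field_simp

lemma eventC {p β c : ℝ} (hp : 0 < p) (hp1 : p < 1)
    {ν : Measure (ℕ → ℕ → Bool)} (hν : IIDBits p ν) (hc : 0 < c)
    (hneg : 1 - β < (-(p * Real.log p) - (1 - p) * Real.log (1 - p)) * c) :
    PolySmall ν (fun n => {ω | (n : ℝ) ^ β ≤
      cnt ω (Finset.Ico 1 n) (kk c n) (fun j => ω 0 j)}) := by
  have := hν.1
  obtain ⟨C, hC, δ, hδ, H⟩ := master p (1 - p) (Real.log p) (Real.log (1 - p)) (1 - β) c 1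
    hp.le (by linarith) (by ring) hc (by norm_num) (by linarith)
  refine ⟨C, hC, δ, hδ, ?_⟩
  filter_upwards [eventually_ge_atTop 1] with n hn
  have hn0 : (0 : ℝ) < n := by exact_mod_cast hn
  have Hn := H n hn
  set k := kk c n
  have hsub : {ω : ℕ → ℕ → Bool | (n : ℝ) ^ β ≤ cnt ω (Finset.Ico 1 n) k (fun j => ω 0 j)} ⊆
      ⋃ r : Fin k → Bool, Ev k r {0} ∩ {ω | (n : ℝ) ^ β ≤ cnt ω (Finset.Ico 1 n) k r} := by
    intro ω hω
    refine Set.mem_iUnion.mpr ⟨fun j => ω 0 j, ?_, hω⟩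
    simp [Ev]
  refine (measureReal_mono hsub).trans ((measureReal_iUnion_fintype_le _).trans (le_trans ?_ Hn))
  refine Finset.sum_le_sum fun r _ => ?_
  have hP := wordPr_pos hp hp1 k r
  refine (upper_tail hp hp1 hν k r {0} (Finset.Ico 1 n) (by simp) (by positivity)).trans ?_
  rw [Finset.card_singleton, pow_one, wordPr_eq_exp hp hp1]
  refine mul_le_mul_of_nonneg_left (min_le_min le_rfl ?_) hP.le
  rw [Real.rpow_sub hn0, Real.rpow_one, Nat.card_Ico, one_mul, div_mul_eq_mul_div]
  gcongr
  exact Nat.sub_le _ _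

lemma eventD {p β c : ℝ} (hp : 0 < p) (hp1 : p < 1) (hβ : 0 ≤ β)
    {ν : Measure (ℕ → ℕ → Bool)} (hν : IIDBits p ν) (hc : 0 < c)
    (hneg : (-(p * Real.log p) - (1 - p) * Real.log (1 - p)) * c < 1 - β) :
    PolySmall ν (fun n => {ω | (cnt ω (Finset.Ico 1 n) (kk c n) (fun j => ω 0 j) : ℝ) ≤
      (n : ℝ) ^ β}) := by
  have := hν.1
  obtain ⟨C, hC, δ, hδ, H⟩ := master p (1 - p) (-Real.log p) (-Real.log (1 - p)) (β - 1) c 8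
    hp.le (by linarith) (by ring) hc (by norm_num) (by linarith)
  refine ⟨C, hC, δ, hδ, ?_⟩
  filter_upwards [eventually_ge_atTop 2] with n hn
  have hn2 : (2 : ℝ) ≤ n := by exact_mod_cast hn
  have hn0 : (0 : ℝ) < n := by linarith
  have Hn := H n (by omega)
  set k := kk c n
  have hsub : {ω : ℕ → ℕ → Bool | (cnt ω (Finset.Ico 1 n) k (fun j => ω 0 j) : ℝ) ≤ (n : ℝ) ^ β} ⊆
      ⋃ r : Fin k → Bool, Ev k r {0} ∩ {ω | (cnt ω (Finset.Ico 1 n) k r : ℝ) ≤ (n : ℝ) ^ β} := by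
    intro ω hω
    refine Set.mem_iUnion.mpr ⟨fun j => ω 0 j, ?_, hω⟩
    simp [Ev]
  refine (measureReal_mono hsub).trans ((measureReal_iUnion_fintype_le _).trans (le_trans ?_ Hn))
  refine Finset.sum_le_sum fun r _ => ?_
  have hP := wordPr_pos hp hp1 k r
  refine (lower_tail hp hp1 hν k r {0} (Finset.Ico 1 n) (by simp) (by simp; omega)
    (Real.one_le_rpow (by linarith) hβ)).trans ?_
  rw [Finset.card_singleton, pow_one, wordPr_inv_eq_exp hp hp1]
  refine mul_le_mul_of_nonneg_left (min_le_min le_rfl ?_) hP.le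
  rw [Real.rpow_sub hn0, Real.rpow_one, Nat.card_Ico, Nat.cast_sub (by omega), Nat.cast_one]
  have hT : 0 < (n : ℝ) ^ β := by positivity
  rw [div_le_iff₀ (mul_pos (by linarith) hP)]
  have : 8 * ((n : ℝ) ^ β / n) * (wordPr p k r)⁻¹ * ((n - 1) * wordPr p k r) =
      8 * (n : ℝ) ^ β * ((n - 1) / n) := by field_simp
  rw [this]
  have h2 : (1 / 2 : ℝ) ≤ (n - 1) / n := by
    rw [div_le_div_iff₀ (by norm_num) hn0]; linarith
  nlinarith

/-! ### Deterministic facts on the fillup level -/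

lemma fillCount_succ (ω : ℕ → ℕ → Bool) (n k : ℕ) :
    fillCount ω n (k + 1) ≤ 2 * fillCount ω n k := by
  classical
  unfold fillCount
  refine Finset.card_le_mul_card_image_of_maps_to
    (f := fun r : Fin (k + 1) → Bool => (Fin.init r : Fin k → Bool)) ?_ 2 ?_
  · intro r hr
    simp only [Finset.mem_univ, true_and, Finset.mem_filter]
      at hr ⊢
    refine hr.trans (Finset.card_le_card ?_)
    intro i hi
    simp only [Finset.mem_filter] at hi ⊢
    exact ⟨hi.1, fun j => hi.2 j.castSucc⟩
  · intro b _
    calc _ ≤ (Finset.univ.image fun t : Bool => (Fin.snoc b t : Fin (k + 1) → Bool)).card := by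
          refine Finset.card_le_card ?_
          intro r hr
          simp only [Finset.mem_filter] at hr
          simp only [Finset.mem_image, Finset.mem_univ, true_and]
          refine ⟨r (Fin.last k), ?_⟩
          rw [← hr.2, Fin.snoc_init_self]
      _ ≤ 2 := by
          refine Finset.card_image_le.trans ?_
          simp

lemma fracFilled_antitone (ω : ℕ → ℕ → Bool) (n : ℕ) : Antitone (fracFilled ω n) := by
  refine antitone_nat_of_succ_le fun k => ?_
  unfold fracFilled
  rw [div_le_div_iff₀ (by positivity) (by positivity), pow_succ]
  have : (fillCount ω n (k + 1) : ℝ) ≤ 2 * fillCount ω n k := by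
    exact_mod_cast fillCount_succ ω n k
  have h2 : (0 : ℝ) < 2 ^ k := by positivity
  nlinarith

lemma fillupLevel_lt {α : ℝ} (hα1 : α < 1) {ω : ℕ → ℕ → Bool} {n k : ℕ} (hn : 2 ≤ n)
    (h : fracFilled ω n k < α) : fillupLevel α ω n < k := by
  have hbd : ∀ m ∈ {k | α ≤ fracFilled ω n k}, m ≤ k := by
    intro m hm
    by_contra hk
    push Not at hk
    exact absurd (hm.trans (fracFilled_antitone ω n hk.le)) (not_le.mpr h)
  have hmem : fillupLevel α ω n ∈ {k | α ≤ fracFilled ω n k} := by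
    refine Nat.sSup_mem ⟨0, ?_⟩ ⟨k, hbd⟩
    have : fillCount ω n 0 = 1 := by
      simp [fillCount, prefCount, hn]
    simp only [Set.mem_ofPred_eq, fracFilled, this]
    norm_num
    exact hα1.le
  refine lt_of_le_of_ne (hbd _ hmem) fun he => ?_
  rw [he] at hmem
  exact absurd hmem (not_le.mpr h)

lemma le_fillupLevel {α : ℝ} {ω : ℕ → ℕ → Bool} {n k k' : ℕ}
    (h : α ≤ fracFilled ω n k) (h' : fracFilled ω n k' < α) : k ≤ fillupLevel α ω n := by
  refine le_csSup ⟨k', ?_⟩ h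
  intro m hm
  by_contra hk
  push Not at hk
  exact absurd (hm.trans (fracFilled_antitone ω n hk.le)) (not_le.mpr h')

lemma Ycount_le {α : ℝ} {ω : ℕ → ℕ → Bool} {n k : ℕ} (hk : k ≤ fillupLevel α ω n) :
    Ycount α ω n ≤ cnt ω (Finset.Ico 1 n) k (fun j => ω 0 j) + 1 := by
  unfold Ycount cnt
  refine le_trans (Finset.card_le_card ?_) (Finset.card_insert_le 0 _)
  intro i hi
  simp only [Finset.mem_filter, Finset.mem_range, Finset.mem_insert, Finset.mem_Ico] at hi ⊢
  by_cases h0 : i = 0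
  · exact Or.inl h0
  · exact Or.inr ⟨⟨by omega, hi.1⟩, fun j => hi.2 j (by omega)⟩

lemma le_Ycount {α : ℝ} {ω : ℕ → ℕ → Bool} {n k : ℕ} (hk : fillupLevel α ω n < k) :
    cnt ω (Finset.Ico 1 n) k (fun j => ω 0 j) ≤ Ycount α ω n := by
  unfold Ycount cnt
  refine Finset.card_le_card ?_
  intro i hi
  simp only [Finset.mem_filter, Finset.mem_range, Finset.mem_Ico] at hi ⊢
  exact ⟨hi.1.2, fun j hj => hi.2 ⟨j, by omega⟩⟩

lemma one_le_Ycount {α : ℝ} {ω : ℕ → ℕ → Bool} {n : ℕ} (hn : 2 ≤ n) : 1 ≤ Ycount α ω n := by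
  unfold Ycount
  refine Finset.card_pos.mpr ⟨0, ?_⟩
  simp only [Finset.mem_filter, Finset.mem_range]
  exact ⟨by omega, fun _ _ => trivial⟩

lemma polySmall_finish {ν : Measure (ℕ → ℕ → Bool)} [IsProbabilityMeasure ν]
    {G : ℕ → Set (ℕ → ℕ → Bool)} (h : PolySmall ν (fun n => (G n)ᶜ)) :
    ∃ C > (0 : ℝ), ∃ δ > (0 : ℝ), ∀ n : ℕ, 2 ≤ n →
      ENNReal.ofReal (1 - C * (n : ℝ) ^ (-δ)) ≤ ν (G n) := by
  obtain ⟨C, hC, δ, hδ, H⟩ := h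
  obtain ⟨N, hN⟩ := eventually_atTop.mp H
  refine ⟨C + (N : ℝ) ^ δ, by positivity, δ, hδ, fun n hn => ?_⟩
  have hn0 : (0 : ℝ) < n := by exact_mod_cast (by omega : 0 < n)
  have hnp : 0 < (n : ℝ) ^ (-δ) := by positivity
  by_cases hnN : N ≤ n
  · have h1 := hN n hnN
    have h2 : 1 ≤ ν.real (G n) + ν.real (G n)ᶜ := by
      have := measureReal_union_le (μ := ν) (G n) (G n)ᶜ
      rwa [Set.union_compl_self, probReal_univ] at this
    rw [← ofReal_measureReal (μ := ν) (s := G n)]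
    refine ENNReal.ofReal_le_ofReal ?_
    have : 0 ≤ (N : ℝ) ^ δ * (n : ℝ) ^ (-δ) := by positivity
    nlinarith
  · rw [ENNReal.ofReal_of_nonpos]
    · exact zero_le
    · push Not at hnN
      have h1 : (1 : ℝ) ≤ (N : ℝ) ^ δ * (n : ℝ) ^ (-δ) := by
        rw [Real.rpow_neg hn0.le, ← div_eq_mul_inv, one_le_div (by positivity)]
        exact Real.rpow_le_rpow hn0.le (by exact_mod_cast hnN.le) hδ.le
      have := mul_pos hC hnp
      nlinarith

/-- Lemma A of Janson–Szpankowski: with `κ = h / log(1/√(pq))`, for every `ε > 0`,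
with probability `1 - O(n^{-Θ(1)})` one has `1 - κ - ε < ln Y_n / ln n < 1 - κ + ε`. -/
theorem Ycount_concentration
    (p q α : ℝ) (hp : 0 < p) (hp1 : p < 1) (hq : q = 1 - p) (hα : 0 < α) (hα1 : α < 1)
    (h κ : ℝ) (hh : h = -(p * Real.logb 2 p) - q * Real.logb 2 q)
    (hκ : κ = h / Real.logb 2 (1 / Real.sqrt (p * q)))
    (ν : Measure (ℕ → ℕ → Bool)) (hν : IIDBits p ν) :
    ∀ ε > (0 : ℝ), ∃ C > (0 : ℝ), ∃ δ > (0 : ℝ), ∀ n : ℕ, 2 ≤ n →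
      ENNReal.ofReal (1 - C * (n : ℝ) ^ (-δ)) ≤
        ν {ω | 1 - κ - ε < Real.log (Ycount α ω n) / Real.log n ∧
               Real.log (Ycount α ω n) / Real.log n < 1 - κ + ε} := by
  intro ε hε
  have := hν.1
  subst hq
  have hq0 : 0 < 1 - p := by linarith
  have hln2 : 0 < Real.log 2 := Real.log_pos (by norm_num)
  set lam : ℝ := -(Real.log p + Real.log (1 - p)) / 2 with hlam
  set H : ℝ := -(p * Real.log p) - (1 - p) * Real.log (1 - p) with hH
  have hlp : Real.log p < 0 := Real.log_neg hp hp1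
  have hlq : Real.log (1 - p) < 0 := Real.log_neg hq0 (by linarith)
  have hlam0 : 0 < lam := by rw [hlam]; linarith
  have hH0 : 0 < H := by rw [hH]; nlinarith
  have hκ' : κ = H / lam := by
    have e1 : Real.log (1 / Real.sqrt (p * (1 - p))) = lam := by
      rw [one_div, Real.log_inv, Real.log_sqrt (by positivity), Real.log_mul hp.ne' hq0.ne', hlam]
      ring
    have e2 : h = H / Real.log 2 := by
      rw [hh, hH]; unfold Real.logb; ring
    rw [hκ, Real.logb, e1, e2]
    field_simp
  have hκ1 : κ ≤ 1 := by
    rw [hκ', div_le_one hlam0, hH, hlam]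
    rcases le_total p (1 - p) with hle | hle
    · have := Real.log_le_log hp hle
      nlinarith
    · have := Real.log_le_log hq0 hle
      nlinarith
  obtain ⟨τ, hτ, hτ1, hτ2⟩ : ∃ τ : ℝ, 0 < τ ∧ H * τ < ε / 2 ∧ τ < 1 / lam := by
    refine ⟨min (ε / (4 * H)) (1 / (2 * lam)), by positivity, ?_, ?_⟩
    · calc _ ≤ H * (ε / (4 * H)) := by gcongr; exact min_le_left _ _
        _ = ε / 4 := by field_simp
        _ < ε / 2 := by linarith
    · refine (min_le_right _ _).trans_lt ?_
      rw [div_lt_div_iff₀ (by positivity) hlam0]; linarith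
  have hc1 : 0 < 1 / lam - τ := by linarith
  have hc2 : 0 < 1 / lam + τ := by positivity
  have hll : lam * (1 / lam) = 1 := by field_simp
  have hHl : H * (1 / lam) = κ := by rw [hκ']; ring
  have hlt : 0 < lam * τ := by positivity
  have hHt : 0 < H * τ := by positivity
  have bA := eventA (c := 1 / lam - τ) hp hp1 hα1 hν hc1 (by rw [← hlam, mul_sub]; linarith)
  have bB := eventB (c := 1 / lam + τ) hp hp1 hα hν hc2 (by rw [← hlam, mul_add]; linarith)
  have bC := eventC (c := 1 / lam - τ) (β := 1 - κ + ε / 2) hp hp1 hν hc1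
    (by rw [← hH, mul_sub]; linarith)
  have bD : PolySmall ν (fun n => {ω | fillupLevel α ω n < kk (1 / lam + τ) n ∧
      Real.log (Ycount α ω n) / Real.log n ≤ 1 - κ - ε}) := by
    by_cases hβ : 0 ≤ 1 - κ - ε
    · have bD := eventD (c := 1 / lam + τ) (β := 1 - κ - ε) hp hp1 hβ hν hc2
        (by rw [← hH, mul_add]; linarith)
      refine bD.mono ?_
      filter_upwards [eventually_ge_atTop 2] with n hn
      rintro ω ⟨h1, h2⟩
      have hY : (1 : ℝ) ≤ Ycount α ω n := by exact_mod_cast one_le_Ycount (α := α) (ω := ω) hn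
      have hn1 : (1 : ℝ) < n := by exact_mod_cast (by omega : 1 < n)
      rw [div_le_iff₀ (Real.log_pos hn1)] at h2
      have h3 : (Ycount α ω n : ℝ) ≤ (n : ℝ) ^ (1 - κ - ε) := by
        rw [Real.rpow_def_of_pos (by linarith), ← Real.log_le_iff_le_exp (by linarith)]
        linarith
      exact le_trans (by exact_mod_cast le_Ycount h1) h3
    · refine ⟨1, one_pos, 1, one_pos, ?_⟩
      filter_upwards [eventually_ge_atTop 2] with n hn
      have : {ω | fillupLevel α ω n < kk (1 / lam + τ) n ∧
          Real.log (Ycount α ω n) / Real.log n ≤ 1 - κ - ε} = ∅ := by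
        ext ω
        simp only [Set.mem_ofPred_eq, Set.mem_empty_iff_false, iff_false, not_and, not_le]
        intro _
        have hY : (1 : ℝ) ≤ Ycount α ω n := by exact_mod_cast one_le_Ycount (α := α) (ω := ω) hn
        have hn1 : (1 : ℝ) < n := by exact_mod_cast (by omega : 1 < n)
        have := div_nonneg (Real.log_nonneg hY) (Real.log_pos hn1).le
        linarith
      rw [this]
      simp only [measureReal_empty]
      positivity
  refine polySmall_finish ((((bA.union bB).union bC).union bD).mono ?_)
  have hbig : ∀ᶠ n : ℕ in atTop, (2 : ℝ) < (n : ℝ) ^ (ε / 2) :=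
    ((tendsto_rpow_atTop (by positivity : 0 < ε / 2)).comp
      tendsto_natCast_atTop_atTop).eventually_gt_atTop 2
  filter_upwards [eventually_ge_atTop 2, hbig] with n hn hbig
  intro ω hω
  by_contra hcon
  simp only [Set.mem_union, Set.mem_ofPred_eq, not_or, not_lt, not_le, not_and] at hcon
  obtain ⟨⟨⟨gA, gB⟩, gC⟩, gD⟩ := hcon
  have f2 := fillupLevel_lt hα1 hn gB
  have f1 := le_fillupLevel gA gB
  apply hω
  refine ⟨gD f2, ?_⟩
  have hn1 : (1 : ℝ) < n := by exact_mod_cast (by omega : 1 < n)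
  have hn0 : (0 : ℝ) < n := by linarith
  have hY : (1 : ℝ) ≤ Ycount α ω n := by exact_mod_cast one_le_Ycount (α := α) (ω := ω) hn
  have hYle : (Ycount α ω n : ℝ) ≤
      cnt ω (Finset.Ico 1 n) (kk (1 / lam - τ) n) (fun j => ω 0 j) + 1 := by
    exact_mod_cast Ycount_le f1
  have h1 : (1 : ℝ) ≤ (n : ℝ) ^ (1 - κ + ε / 2) := Real.one_le_rpow hn1.le (by linarith)
  have h2 : (n : ℝ) ^ (1 - κ + ε) = (n : ℝ) ^ (1 - κ + ε / 2) * (n : ℝ) ^ (ε / 2) := by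
    rw [← Real.rpow_add hn0]; congr 1; ring
  have h3 : (Ycount α ω n : ℝ) < (n : ℝ) ^ (1 - κ + ε) := by
    rw [h2]; nlinarith
  rw [div_lt_iff₀ (Real.log_pos hn1)]
  have h4 := Real.log_lt_log (by linarith) h3
  rwa [Real.log_rpow hn0] at h4
end

section
/- Fix p ∈ (0,1), let h = −p log p − q log q (logs base 2), and let 0 < a < b < 1/h and ε > 0. Then there exist constants C > 0 and δ > 0 such that for all n ≥ 2, uniformly over all integers k with a log n ≤ k ≤ b log n: P( |log W_k − log n + k h| > ε log n ) ≤ C n^{−δ}, where W_k is the number of indices i ∈ {1,…,n} such that ξ_i agrees with ξ_1 in its first k bits. -/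
/-!
Partial fillup in tries (Janson–Szpankowski), Theorem 1 (two-point concentration
of the α-fillup level `F_n(α)`).

Model: an outcome `ω : ℕ → ℕ → Bool` encodes infinitely many strings, where
`ω i j` is the `j`-th bit of the `i`-th string; the measure `ν` makes all bits
i.i.d. with `P(bit = 1) = p`.  The trie on `n` strings uses strings `0,…,n-1`.
-/

open MeasureTheory ProbabilityTheory Real Filter

/-- `W_k`: the number of indices `i ∈ {1, …, n}` (here `0, …, n-1`) such that `ξ_i`
agrees with the designated string `ξ_1` (index `0`) in its first `k` bits. -/
def Wcount (ω : ℕ → ℕ → Bool) (n k : ℕ) : ℕ :=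
  ((Finset.range n).filter fun i => ∀ j < k, ω i j = ω 0 j).card

/-- weight of a bit -/
noncomputable def wbit (p : ℝ) (c : Bool) : ℝ := if c then p else 1 - p

/-- the event that string `i` begins with the first `k` bits of `r` -/
def pref (k : ℕ) (r : ℕ → Bool) (i : ℕ) : Set (ℕ → ℕ → Bool) := {ω | ∀ j < k, ω i j = r j}

lemma wbit_pos {p : ℝ} (hp : 0 < p) (hp1 : p < 1) (c : Bool) : 0 < wbit p c := by
  unfold wbit; split_ifs <;> linarith

lemma meas_pref (k : ℕ) (r : ℕ → Bool) (i : ℕ) : MeasurableSet (pref k r i) := by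
  have : pref k r i = ⋂ j, ⋂ (_ : j < k), (fun ω : ℕ → ℕ → Bool => ω i j) ⁻¹' {r j} := by
    ext ω; simp [pref]
  rw [this]
  refine MeasurableSet.iInter fun j => MeasurableSet.iInter fun _ => ?_
  have : Measurable (fun ω : ℕ → ℕ → Bool => ω i j) := by fun_prop
  exact this (measurableSet_singleton _)

lemma cyl {p : ℝ} (hp : 0 < p) (hp1 : p < 1) {ν : Measure (ℕ → ℕ → Bool)} (hν : IIDBits p ν)
    (k : ℕ) (r : ℕ → Bool) (T : Finset ℕ) :
    ν.real (⋂ i ∈ T, pref k r i) = (∏ j ∈ Finset.range k, wbit p (r j)) ^ T.card := by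
  have h := hν.2 (T ×ˢ Finset.range k) (fun s => r s.2)
  have e : (⋂ i ∈ T, pref k r i) =
      {ω | ∀ s ∈ T ×ˢ Finset.range k, ω s.1 s.2 = (fun s : ℕ × ℕ => r s.2) s} := by
    ext ω
    simp only [pref, Set.mem_iInter, Set.mem_ofPred_eq, Finset.mem_product, Finset.mem_range,
      Prod.forall]
    exact ⟨fun h a b hab => h a hab.1 b hab.2, fun h a ha b hb => h a b ⟨ha, hb⟩⟩
  rw [measureReal_def, e, h, ENNReal.toReal_prod, Finset.prod_product]
  rw [← Finset.prod_const]
  refine Finset.prod_congr rfl fun i _ => Finset.prod_congr rfl fun j _ => ?_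
  exact ENNReal.toReal_ofReal (wbit_pos hp hp1 (r j)).le

open Classical in
lemma cheb {p : ℝ} (hp : 0 < p) (hp1 : p < 1) {ν : Measure (ℕ → ℕ → Bool)} (hν : IIDBits p ν)
    (k n : ℕ) (r : ℕ → Bool) (P : ℝ) (hP : P = ∏ j ∈ Finset.range k, wbit p (r j)) (t : ℝ)
    (ht : 0 ≤ t) :
    t ^ 2 * ν.real {ω | ω ∈ pref k r 0 ∧
      t ≤ |(((Finset.Ico 1 n).filter fun i => ω ∈ pref k r i).card : ℝ) - (n - 1 : ℕ) * P|} ≤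
      (n - 1 : ℕ) * P * P := by
  have := hν.1
  have hP0 : 0 < P := hP ▸ Finset.prod_pos fun j _ => wbit_pos hp hp1 _
  set m : ℝ := ((n - 1 : ℕ) : ℝ) with hm
  set f : ℕ → (ℕ → ℕ → Bool) → ℝ := fun i => (pref k r i).indicator 1 with hf
  have i3 : ∀ i j, (fun ω => f 0 ω * f i ω * f j ω) =
      (⋂ l ∈ ({0, i, j} : Finset ℕ), pref k r l).indicator 1 := by
    intro i j; ext ω
    simp only [hf, Set.indicator_apply, Pi.one_apply]
    by_cases h0 : ω ∈ pref k r 0 <;> by_cases h1 : ω ∈ pref k r i <;>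
      by_cases h2 : ω ∈ pref k r j <;> simp [h0, h1, h2]
  have ms : ∀ T : Finset ℕ, MeasurableSet (⋂ l ∈ T, pref k r l) := fun T =>
    Finset.measurableSet_biInter _ fun l _ => meas_pref k r l
  have I3 : ∀ i j, Integrable (fun ω => f 0 ω * f i ω * f j ω) ν := by
    intro i j; rw [i3]
    exact (integrable_const (1 : ℝ)).indicator (ms _)
  have v3 : ∀ i j, ∫ ω, f 0 ω * f i ω * f j ω ∂ν = P ^ ({0, i, j} : Finset ℕ).card := by
    intro i j; rw [i3, integral_indicator_one (ms _), cyl hp hp1 hν, hP]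
  have f00 : ∀ i ω, f i ω * f i ω = f i ω := by
    intro i ω; simp only [hf, Set.indicator_apply]; split_ifs <;> simp
  have expand : ∀ ω, f 0 ω * (∑ i ∈ Finset.Ico 1 n, f i ω - m * P) ^ 2 =
      (∑ i ∈ Finset.Ico 1 n, ∑ j ∈ Finset.Ico 1 n, f 0 ω * f i ω * f j ω)
       - (2 * (m * P)) * (∑ i ∈ Finset.Ico 1 n, f 0 ω * f 0 ω * f i ω)
       + (m * P) ^ 2 * (f 0 ω * f 0 ω * f 0 ω) := by
    intro ω
    simp only [f00, ← Finset.mul_sum, ← Finset.sum_mul]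
    ring
  have J1 : Integrable (fun ω => ∑ i ∈ Finset.Ico 1 n, ∑ j ∈ Finset.Ico 1 n,
      f 0 ω * f i ω * f j ω) ν :=
    integrable_finsetSum _ fun i _ => integrable_finsetSum _ fun j _ => I3 i j
  have J2 : Integrable (fun ω => (2 * (m * P)) * (∑ i ∈ Finset.Ico 1 n, f 0 ω * f 0 ω * f i ω)) ν :=
    (integrable_finsetSum _ fun i _ => I3 0 i).const_mul _
  have J3 : Integrable (fun ω => (m * P) ^ 2 * (f 0 ω * f 0 ω * f 0 ω)) ν := (I3 0 0).const_mul _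
  have hI : Integrable (fun ω => f 0 ω * (∑ i ∈ Finset.Ico 1 n, f i ω - m * P) ^ 2) ν := by
    simp only [expand]
    exact (J1.sub J2).add J3
  have hcard : ((Finset.Ico 1 n).card : ℝ) = m := by simp [hm]
  have hval : ∫ ω, f 0 ω * (∑ i ∈ Finset.Ico 1 n, f i ω - m * P) ^ 2 ∂ν
      = m * P ^ 2 - m * P ^ 3 := by
    simp only [expand]
    rw [integral_add (by exact J1.sub J2) J3, integral_sub J1 J2, integral_const_mul, integral_const_mul,
      integral_finsetSum _ (fun i _ => integrable_finsetSum _ fun j _ => I3 i j),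
      integral_finsetSum _ (fun i _ => I3 0 i)]
    have a1 : ∀ i ∈ Finset.Ico 1 n, ∫ ω, ∑ j ∈ Finset.Ico 1 n, f 0 ω * f i ω * f j ω ∂ν
        = m * P ^ 3 + (P ^ 2 - P ^ 3) := by
      intro i hi
      have hi1 := (Finset.mem_Ico.1 hi).1
      rw [integral_finsetSum _ (fun j _ => I3 i j)]
      have : ∀ j ∈ Finset.Ico 1 n, ∫ ω, f 0 ω * f i ω * f j ω ∂ν
          = P ^ 3 + if i = j then (P ^ 2 - P ^ 3) else 0 := by
        intro j hj
        have hj1 := (Finset.mem_Ico.1 hj).1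
        rw [v3]
        split_ifs with hij
        · subst hij
          have : ({0, i, i} : Finset ℕ).card = 2 := by
            rw [Finset.pair_eq_singleton, Finset.card_pair (by omega)]
          rw [this]; ring
        · have : ({0, i, j} : Finset ℕ).card = 3 := 
            Finset.card_eq_three.2 ⟨0, i, j, by omega, by omega, hij, rfl⟩
          rw [this]; ring
      rw [Finset.sum_congr rfl this, Finset.sum_add_distrib, Finset.sum_const, nsmul_eq_mul, hcard,
        Finset.sum_ite_eq, if_pos hi]
    have a2 : ∀ i ∈ Finset.Ico 1 n, ∫ ω, f 0 ω * f 0 ω * f i ω ∂ν = P ^ 2 := by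
      intro i hi
      have hi1 := (Finset.mem_Ico.1 hi).1
      rw [v3]
      have : ({0, 0, i} : Finset ℕ).card = 2 := by
        rw [Finset.insert_idem, Finset.card_pair (by omega)]
      rw [this]
    rw [Finset.sum_congr rfl a1, Finset.sum_congr rfl a2, v3]
    simp only [Finset.sum_const, nsmul_eq_mul, hcard]
    simp
    ring
  have key := mul_meas_ge_le_integral_of_nonneg (μ := ν)
    (f := fun ω => f 0 ω * (∑ i ∈ Finset.Ico 1 n, f i ω - m * P) ^ 2)
    (Filter.Eventually.of_forall fun ω => by
      have : 0 ≤ f 0 ω := Set.indicator_nonneg (fun _ _ => zero_le_one) ω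
      simp only [Pi.zero_apply]
      positivity) hI (t ^ 2)
  rw [hval] at key
  have hm0 : 0 ≤ m := Nat.cast_nonneg _
  have : 0 ≤ m * P ^ 3 := by positivity
  refine le_trans (mul_le_mul_of_nonneg_left (measureReal_mono ?_) (sq_nonneg t)) (key.trans (by nlinarith))
  rintro ω ⟨h0, h1⟩
  have hs : ∑ i ∈ Finset.Ico 1 n, f i ω =
      (((Finset.Ico 1 n).filter fun i => ω ∈ pref k r i).card : ℝ) := by
    simp [hf, Set.indicator_apply]
  have h00 : f 0 ω = 1 := by simp [hf, h0]
  simp only [Set.mem_ofPred_eq, hs, h00, one_mul]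
  rw [← sq_abs (_ - _)]
  gcongr


lemma exp_quad_s15 {x : ℝ} (hx : |x| ≤ 1) : Real.exp x ≤ 1 + x + x ^ 2 := by
  have := Real.abs_exp_sub_one_sub_id_le hx
  have := (abs_le.1 this).2
  linarith

/-- one-sided exponential tail for a sum of i.i.d. centered terms, as a finite sum -/
lemma tail1 (w x : Bool → ℝ) (hw : ∀ c, 0 ≤ w c) (hw1 : w true + w false = 1)
    (hx : w true * x true + w false * x false = 0) (M : ℝ) (hM : ∀ c, |x c| ≤ M)
    (t : ℝ) (ht : 0 ≤ t) (htM : t * M ≤ 1) (k : ℕ) (s : ℝ) :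
    ∑ r : Fin k → Bool, (if s < ∑ j, x (r j) then ∏ j, w (r j) else 0) ≤
      Real.exp (k * (t ^ 2 * M ^ 2) - t * s) := by
  have hone : ∀ c, Real.exp (t * x c) ≤ 1 + t * x c + t ^ 2 * M ^ 2 := by
    intro c
    have h1 : |t * x c| ≤ 1 := by
      rw [abs_mul, abs_of_nonneg ht]
      exact (mul_le_mul_of_nonneg_left (hM c) ht).trans htM
    have h2 : x c ^ 2 ≤ M ^ 2 := by
      rw [← sq_abs]; exact pow_le_pow_left₀ (abs_nonneg _) (hM c) 2
    have := exp_quad_s15 h1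
    nlinarith [mul_le_mul_of_nonneg_left h2 (sq_nonneg t)]
  have hE : ∑ c : Bool, w c * Real.exp (t * x c) ≤ Real.exp (t ^ 2 * M ^ 2) := by
    rw [Fintype.sum_bool]
    have h1 := mul_le_mul_of_nonneg_left (hone true) (hw true)
    have h2 := mul_le_mul_of_nonneg_left (hone false) (hw false)
    have h3 := Real.add_one_le_exp (t ^ 2 * M ^ 2)
    have : w true * (1 + t * x true + t ^ 2 * M ^ 2) + w false * (1 + t * x false + t ^ 2 * M ^ 2)
      = (w true + w false) * (1 + t ^ 2 * M ^ 2) + t * (w true * x true + w false * x false) := by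
      ring
    rw [hw1, hx] at this
    linarith
  calc _ ≤ ∑ r : Fin k → Bool, Real.exp (-(t * s)) * ∏ j, (w (r j) * Real.exp (t * x (r j))) := by
        refine Finset.sum_le_sum fun r _ => ?_
        have hp : 0 ≤ ∏ j, w (r j) := Finset.prod_nonneg fun j _ => hw _
        rw [Finset.prod_mul_distrib, ← Real.exp_sum, ← Finset.mul_sum]
        split_ifs with h
        · have : 1 ≤ Real.exp (-(t * s)) * Real.exp (t * ∑ j, x (r j)) := by
            rw [← Real.exp_add]
            apply Real.one_le_exp
            nlinarith [mul_le_mul_of_nonneg_left h.le ht]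
          nlinarith [mul_le_mul_of_nonneg_left this hp]
        · positivity
    _ = Real.exp (-(t * s)) * (∑ c : Bool, w c * Real.exp (t * x c)) ^ k := by
        rw [← Finset.mul_sum, Fintype.sum_pow]
    _ ≤ Real.exp (-(t * s)) * (Real.exp (t ^ 2 * M ^ 2)) ^ k := by
        gcongr
        exact Finset.sum_nonneg fun c _ => mul_nonneg (hw c) (Real.exp_pos _).le
    _ = _ := by
        rw [← Real.exp_nat_mul, ← Real.exp_add]; ring_nf

lemma tail2 (w x : Bool → ℝ) (hw : ∀ c, 0 ≤ w c) (hw1 : w true + w false = 1)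
    (hx : w true * x true + w false * x false = 0) (M : ℝ) (hM : ∀ c, |x c| ≤ M)
    (t : ℝ) (ht : 0 ≤ t) (htM : t * M ≤ 1) (k : ℕ) (s : ℝ) :
    ∑ r : Fin k → Bool, (if s < |∑ j, x (r j)| then ∏ j, w (r j) else 0) ≤
      2 * Real.exp (k * (t ^ 2 * M ^ 2) - t * s) := by
  have h1 := tail1 w x hw hw1 hx M hM t ht htM k s
  have h2 := tail1 w (fun c => - x c) hw hw1 (by linarith) M (fun c => by simpa using hM c)
    t ht htM k s
  rw [two_mul]
  refine le_trans ?_ (add_le_add h1 h2)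
  rw [← Finset.sum_add_distrib]
  refine Finset.sum_le_sum fun r _ => ?_
  have hp : 0 ≤ ∏ j, w (r j) := Finset.prod_nonneg fun j _ => hw _
  simp only [Finset.sum_neg_distrib]
  by_cases h : s < |∑ j, x (r j)|
  · rw [if_pos h]
    rcases lt_abs.1 h with h | h
    · rw [if_pos h]; split_ifs <;> linarith
    · rw [if_pos h]; split_ifs <;> linarith
  · rw [if_neg h]; split_ifs <;> linarith

/-- extend a finite word by zeros -/
def extw {k : ℕ} (r : Fin k → Bool) (j : ℕ) : Bool := if h : j < k then r ⟨j, h⟩ else false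

lemma extw_fin {k : ℕ} (r : Fin k → Bool) (j : Fin k) : extw r j = r j := by
  simp [extw]

open Classical in
lemma Wcount_eq (ω : ℕ → ℕ → Bool) (n k : ℕ) (hn : 1 ≤ n) (r : ℕ → Bool) (h0 : ω ∈ pref k r 0) :
    Wcount ω n k = ((Finset.Ico 1 n).filter fun i => ω ∈ pref k r i).card + 1 := by
  have h0' : ∀ j < k, ω 0 j = r j := h0
  have : (Finset.range n).filter (fun i => ∀ j < k, ω i j = ω 0 j) =
      insert 0 ((Finset.Ico 1 n).filter fun i => ω ∈ pref k r i) := by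
    ext i
    rw [Finset.mem_insert, Finset.mem_filter, Finset.mem_filter, Finset.mem_range, Finset.mem_Ico]
    constructor
    · rintro ⟨h1, h2⟩
      rcases Nat.eq_zero_or_pos i with h | h
      · exact Or.inl h
      · exact Or.inr ⟨⟨h, h1⟩, fun j hj => (h2 j hj).trans (h0' j hj)⟩
    · rintro (h | ⟨h1, h2⟩)
      · subst h; exact ⟨hn, fun _ _ => rfl⟩
      · exact ⟨h1.2, fun j hj => (h2 j hj).trans (h0' j hj).symm⟩
  rw [Wcount, this, Finset.card_insert_of_notMem (by simp)]

lemma log_close {x y : ℝ} (hx : 0 < x) (h1 : x / 4 ≤ y) (h2 : y ≤ 4 * x) :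
    |Real.logb 2 y - Real.logb 2 x| ≤ 2 := by
  have hy : 0 < y := by linarith
  have l4 : Real.logb 2 4 = 2 := by
    rw [show (4 : ℝ) = 2 ^ (2 : ℝ) by norm_num, Real.logb_rpow (by norm_num) (by norm_num)]
  have a1 := Real.logb_le_logb_of_le (b := 2) (by norm_num) (by positivity) h1
  have a2 := Real.logb_le_logb_of_le (b := 2) (by norm_num) hy h2
  rw [Real.logb_div hx.ne' (by norm_num), l4] at a1
  rw [Real.logb_mul (by norm_num) hx.ne', l4] at a2
  rw [abs_le]; constructor <;> linarith

open Classical in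
/-- the main estimate, for large `n` -/
lemma main_bound {p : ℝ} (hp : 0 < p) (hp1 : p < 1) {ν : Measure (ℕ → ℕ → Bool)}
    (hν : IIDBits p ν) (h ε e c D : ℝ) (n k : ℕ) (hn : 2 ≤ n)
    (he : e ≤ ε / 2) (hc : 0 ≤ c)
    (hlarge : 2 ≤ ε / 2 * Real.logb 2 n)
    (hk : (k : ℝ) * h + e * Real.logb 2 n + c * Real.logb 2 n ≤ Real.logb 2 n)
    (htail : ∑ r : Fin k → Bool, (if e * Real.logb 2 n < |∑ j, (Real.logb 2 (wbit p (r j)) + h)|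
      then ∏ j, wbit p (r j) else 0) ≤ D) :
    ν.real {ω | ε * Real.logb 2 n <
            |Real.logb 2 (Wcount ω n k) - Real.logb 2 n + (k : ℝ) * h|} ≤
      D + 8 * (n : ℝ) ^ (-c) := by
  have := hν.1
  set L := Real.logb 2 n with hL
  have hn' : (2 : ℝ) ≤ n := by exact_mod_cast hn
  have hn0 : (0 : ℝ) < n := by linarith
  have hL0 : 0 < L := Real.logb_pos (by norm_num) (by linarith)
  set P : (Fin k → Bool) → ℝ := fun r => ∏ j, wbit p (r j) with hP
  have hP0 : ∀ r, 0 < P r := fun r => Finset.prod_pos fun j _ => wbit_pos hp hp1 _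
  have hPe : ∀ r : Fin k → Bool, P r = ∏ j ∈ Finset.range k, wbit p (extw r j) := by
    intro r
    rw [Finset.prod_range]
    simp only [extw_fin, hP]
  have hsum : ∑ r, P r = 1 := by
    simp only [hP]
    rw [← Fintype.sum_pow, Fintype.sum_bool]
    simp [wbit]
  set m : ℝ := ((n - 1 : ℕ) : ℝ) with hm
  have hm' : m = n - 1 := by rw [hm, Nat.cast_sub (by omega)]; simp
  set atyp : (Fin k → Bool) → Prop := fun r =>
    e * L < |∑ j, (Real.logb 2 (wbit p (r j)) + h)| with hatyp
  set N : (Fin k → Bool) → (ℕ → ℕ → Bool) → ℝ := fun r ω =>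
    (((Finset.Ico 1 n).filter fun i => ω ∈ pref k (extw r) i).card : ℝ) with hN
  set B : (Fin k → Bool) → Set (ℕ → ℕ → Bool) := fun r =>
    if atyp r then pref k (extw r) 0 else
      {ω | ω ∈ pref k (extw r) 0 ∧ m * P r / 2 ≤ |N r ω - m * P r|} with hB
  have hlog : ∀ r, Real.logb 2 (n * P r) =
      L + ((∑ j, (Real.logb 2 (wbit p (r j)) + h)) - k * h) := by
    intro r
    rw [Real.logb_mul hn0.ne' (hP0 r).ne', hP, Real.logb_prod _ _ (fun j _ => (wbit_pos hp hp1 _).ne'),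
      Finset.sum_add_distrib]
    simp [hL]
  have hbig : ∀ r, ¬ atyp r → (n : ℝ) ^ c ≤ n * P r := by
    intro r hr
    have hr' := abs_le.1 (not_lt.1 hr)
    have h1 : c * L ≤ Real.logb 2 (n * P r) := by rw [hlog]; linarith [hr'.1]
    rw [Real.le_logb_iff_rpow_le (by norm_num) (mul_pos hn0 (hP0 r))] at h1
    rwa [mul_comm, Real.rpow_mul (by norm_num), hL, Real.rpow_logb (by norm_num) (by norm_num) hn0]
      at h1
  have hnc : 1 ≤ (n : ℝ) ^ c := Real.one_le_rpow (by linarith) hc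
  have hcover : {ω | ε * L < |Real.logb 2 (Wcount ω n k) - L + (k : ℝ) * h|} ⊆ ⋃ r, B r := by
    intro ω hω
    rw [Set.mem_iUnion]
    refine ⟨fun j => ω 0 j, ?_⟩
    set r : Fin k → Bool := fun j => ω 0 j with hr
    have h0 : ω ∈ pref k (extw r) 0 := by
      intro j hj
      simp [extw, hj, hr]
    simp only [hB]
    split_ifs with hat
    · exact h0
    · refine ⟨h0, ?_⟩
      by_contra hcon
      rw [not_le, abs_lt] at hcon
      have hW : (Wcount ω n k : ℝ) = N r ω + 1 := by
        rw [Wcount_eq ω n k (by omega) (extw r) h0]; simp [hN]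
      have hb := hnc.trans (hbig r hat)
      have hmP : n * P r / 2 ≤ m * P r := by rw [hm']; nlinarith [hP0 r]
      have hmP2 : m * P r ≤ n * P r := by rw [hm']; nlinarith [hP0 r]
      have hcl := log_close (x := n * P r) (y := Wcount ω n k) (by linarith)
        (by rw [hW]; linarith [hcon.1]) (by rw [hW]; linarith [hcon.2])
      rw [hlog] at hcl
      have hat' := abs_le.1 (not_lt.1 hat)
      have hcl' := abs_le.1 hcl
      have heL : e * L ≤ ε / 2 * L := mul_le_mul_of_nonneg_right he hL0.le
      have hω' : ε * L < |Real.logb 2 (Wcount ω n k) - L + (k : ℝ) * h| := hω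
      refine absurd hω' (not_lt.2 (abs_le.2 ⟨?_, ?_⟩))
      · linarith [hat'.1, hcl'.1]
      · linarith [hat'.2, hcl'.2]
  have hBr : ∀ r, ν.real (B r) ≤ (if atyp r then P r else 0) + P r * (8 * (n : ℝ) ^ (-c)) := by
    intro r
    have hnn : 0 ≤ P r * (8 * (n : ℝ) ^ (-c)) := by have := hP0 r; positivity
    simp only [hB]
    split_ifs with hat
    · have h1 := cyl hp hp1 hν k (extw r) {0}
      simp only [Finset.mem_singleton, Set.iInter_iInter_eq_left, Finset.card_singleton, pow_one,
        ← hPe] at h1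
      linarith
    · have hPr := hP0 r
      have hm1 : n / 2 ≤ m := by rw [hm']; linarith
      have hmpos : 0 < m := by linarith
      have h1 := cheb hp hp1 hν k n (extw r) (P r) (hPe r) (m * P r / 2) (by positivity)
      have hb := hbig r hat
      have hmP : n * P r / 2 ≤ m * P r := by nlinarith
      rw [zero_add]
      refine le_trans (b := 4 / m) ?_ ?_
      · rw [le_div_iff₀ hmpos]
        have h2 : (m * P r ^ 2 / 4) * (ν.real {ω | ω ∈ pref k (extw r) 0 ∧ m * P r / 2 ≤ |N r ω - m * P r|} * m)
          ≤ (m * P r ^ 2 / 4) * 4 := by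
          refine le_trans (le_of_eq ?_) (h1.trans (le_of_eq ?_)) <;> ring
        exact le_of_mul_le_mul_left h2 (by positivity)
      · rw [Real.rpow_neg hn0.le, div_le_iff₀ hmpos]
        have : 0 < (n : ℝ) ^ c := by linarith
        have h3 : (1 : ℝ) ≤ (n * P r) * ((n : ℝ) ^ c)⁻¹ := by
          rw [← div_eq_mul_inv, le_div_iff₀ this]; linarith
        have h4 : 0 < ((n : ℝ) ^ c)⁻¹ := by positivity
        nlinarith [mul_le_mul_of_nonneg_right hmP h4.le]
  calc _ ≤ ν.real (⋃ r, B r) := measureReal_mono hcover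
    _ ≤ ∑ r, ν.real (B r) := measureReal_iUnion_fintype_le _
    _ ≤ ∑ r, ((if atyp r then P r else 0) + P r * (8 * (n : ℝ) ^ (-c))) :=
        Finset.sum_le_sum fun r _ => hBr r
    _ ≤ _ := by
        rw [Finset.sum_add_distrib, ← Finset.sum_mul, hsum, one_mul]
        refine add_le_add (le_of_eq_of_le ?_ htail) le_rfl
        exact Finset.sum_congr rfl fun r _ => by congr

/-- Lemma C of Janson–Szpankowski: for `0 < a < b < 1/h` and `ε > 0`, uniformly for
`a log n ≤ k ≤ b log n`, `P(|log W_k - log n + k h| > ε log n) = O(n^{-Θ(1)})`. -/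
theorem Wcount_concentration
    (p q a b ε : ℝ) (hp : 0 < p) (hp1 : p < 1) (hq : q = 1 - p)
    (h : ℝ) (hh : h = -(p * Real.logb 2 p) - q * Real.logb 2 q)
    (ha : 0 < a) (hab : a < b) (hb : b < 1 / h) (hε : 0 < ε)
    (ν : Measure (ℕ → ℕ → Bool)) (hν : IIDBits p ν) :
    ∃ C > (0 : ℝ), ∃ δ > (0 : ℝ), ∀ n : ℕ, 2 ≤ n → ∀ k : ℕ,
      a * Real.logb 2 n ≤ (k : ℝ) → (k : ℝ) ≤ b * Real.logb 2 n →
        ν {ω | ε * Real.logb 2 n <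
            |Real.logb 2 (Wcount ω n k) - Real.logb 2 n + (k : ℝ) * h|} ≤
          ENNReal.ofReal (C * (n : ℝ) ^ (-δ)) := by
  have := hν.1
  have hb0 : 0 < b := ha.trans hab
  have hh0 : 0 < h := one_div_pos.1 (hb0.trans hb)
  have hbh : b * h < 1 := by rwa [lt_div_iff₀ hh0] at hb
  set w : Bool → ℝ := wbit p with hw
  set x : Bool → ℝ := fun c => Real.logb 2 (wbit p c) + h with hx
  set M : ℝ := |x true| + |x false| + 1 with hM
  have hM0 : 0 < M := by positivity
  have hxM : ∀ c, |x c| ≤ M := by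
    intro c; cases c
    · linarith [abs_nonneg (x true)]
    · linarith [abs_nonneg (x false)]
  set c : ℝ := (1 - b * h) / 2 with hc
  have hc0 : 0 < c := by linarith
  set e : ℝ := min (ε / 2) c with he
  have he0 : 0 < e := lt_min (by linarith) hc0
  set t : ℝ := min (1 / M) (e / (2 * b * M ^ 2)) with ht
  have ht0 : 0 < t := lt_min (by positivity) (by positivity)
  have htM : t * M ≤ 1 := by
    have : t ≤ 1 / M := min_le_left _ _
    rwa [le_div_iff₀ hM0] at this
  have htM2 : t * (2 * b * M ^ 2) ≤ e := by
    have : t ≤ e / (2 * b * M ^ 2) := min_le_right _ _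
    rwa [le_div_iff₀ (by positivity)] at this
  have hl2 : 0 < Real.log 2 := Real.log_pos (by norm_num)
  set δ1 : ℝ := t * e / (2 * Real.log 2) with hδ1
  have hδ10 : 0 < δ1 := by positivity
  set δ : ℝ := min δ1 c with hδ
  have hδ0 : 0 < δ := lt_min hδ10 hc0
  have h2pos : (0 : ℝ) < 2 ^ (4 / ε * δ) := Real.rpow_pos_of_pos (by norm_num) _
  refine ⟨10 + 2 ^ (4 / ε * δ), by positivity, δ, hδ0, ?_⟩
  intro n hn k _ hkb
  set L := Real.logb 2 n with hL
  have hn' : (2 : ℝ) ≤ n := by exact_mod_cast hn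
  have hn0 : (0 : ℝ) < n := by linarith
  have hL0 : 0 < L := Real.logb_pos (by norm_num) (by linarith)
  have hnd : (0 : ℝ) < (n : ℝ) ^ (-δ) := Real.rpow_pos_of_pos hn0 _
  rw [← ofReal_measureReal]
  apply ENNReal.ofReal_le_ofReal
  by_cases hlarge : 4 / ε ≤ L
  · have hlarge' : 2 ≤ ε / 2 * L := by
      rw [div_le_iff₀ hε] at hlarge; linarith
    have htail := tail2 w x (fun c => (wbit_pos hp hp1 c).le) (by simp [hw, wbit])
      (by simp [hw, hx, wbit]; rw [hh, hq]; ring) M hxM t ht0.le htM k (e * L)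
    have hexp : Real.exp (k * (t ^ 2 * M ^ 2) - t * (e * L)) ≤ (n : ℝ) ^ (-δ1) := by
      rw [Real.rpow_def_of_pos hn0]
      apply Real.exp_le_exp.2
      have hlogn : Real.log n * -δ1 = - (t * e * L / 2) := by
        rw [hδ1, hL, Real.logb]; field_simp
      rw [hlogn]
      have h1 : (k : ℝ) * (t ^ 2 * M ^ 2) ≤ b * L * (t ^ 2 * M ^ 2) := by gcongr
      have h2 : (t * L / 2) * (t * (2 * b * M ^ 2)) ≤ (t * L / 2) * e := by gcongr
      nlinarith
    have hkh : (k : ℝ) * h ≤ b * L * h := by gcongr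
    have hec : e * L ≤ c * L := mul_le_mul_of_nonneg_right (min_le_right _ _) hL0.le
    have hmain := main_bound hp hp1 hν h ε e c (2 * (n : ℝ) ^ (-δ1)) n k hn (min_le_left _ _)
      hc0.le hlarge' (by
        have : c * L + c * L = L - b * L * h := by rw [hc]; ring
        change (k : ℝ) * h + e * L + c * L ≤ L
        linarith)
      (le_trans (Finset.sum_le_sum fun r _ => le_of_eq (by congr))
        (htail.trans (by linarith)))
    have d1 : (n : ℝ) ^ (-δ1) ≤ (n : ℝ) ^ (-δ) :=
      Real.rpow_le_rpow_of_exponent_le (by linarith) (neg_le_neg (min_le_left _ _))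
    have d2 : (n : ℝ) ^ (-c) ≤ (n : ℝ) ^ (-δ) :=
      Real.rpow_le_rpow_of_exponent_le (by linarith) (neg_le_neg (min_le_right _ _))
    have d3 : 0 < 2 ^ (4 / ε * δ) * (n : ℝ) ^ (-δ) := mul_pos h2pos hnd
    refine hmain.trans ?_
    rw [add_mul]
    linarith
  · refine (measureReal_le_one).trans ?_
    have hnL : (n : ℝ) = 2 ^ L := (Real.rpow_logb (by norm_num) (by norm_num) hn0).symm
    have : (1 : ℝ) ≤ 2 ^ (4 / ε * δ) * (n : ℝ) ^ (-δ) := by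
      rw [hnL, ← Real.rpow_mul (by norm_num), ← Real.rpow_add (by norm_num)]
      apply Real.one_le_rpow (by norm_num)
      have : L * δ ≤ 4 / ε * δ := mul_le_mul_of_nonneg_right (not_le.1 hlarge).le hδ0.le
      linarith
    rw [add_mul]
    linarith
end
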